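/- Let γ : [a,b] → ℝ³ be a rectifiable constant-speed curve with |γ(t)| ≥ 1 for all t, and let γ̃ : [a,b] → ℝ² be its unfolding. Then |γ̃(t)| = |γ(t)| for all t, L(γ̃) = L(γ), and H(ι ∘ γ̃) = H(γ), where ι : ℝ² → ℝ³ is the standard isometric embedding (x,y) ↦ (x,y,0); in particular E(ι ∘ γ̃) = E(γ). -/

import Mathlib

open MeasureTheory Set Real
open scoped ENNReal NNReal RealInnerProductSpace

noncomputable section

abbrev E3 := EuclideanSpace ℝ (Fin 3)
abbrev E2 := EuclideanSpace ℝ (Fin 2)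

/-- The horizon of a curve: the measure, counted with multiplicity, of the set of points
`p` of the unit sphere whose tangent plane `{x : ⟨x,p⟩ = 1}` meets the curve. -/
def horizon (a b : ℝ) (γ : ℝ → E3) : ℝ≥0∞ :=
  ∫⁻ p : Metric.sphere (0 : E3) 1,
    ({t ∈ Set.Ico a b | ⟪γ t, (p : E3)⟫ = 1}.encard : ℝ≥0∞)
      ∂((volume : Measure E3).toSphere)

/-- The arclength of the radial (spherical) projection `γ/|γ|` over `[a,t]`. -/
def sphericalArc (a : ℝ) (γ : ℝ → E3) (t : ℝ) : ℝ :=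
  (eVariationOn (fun s => ‖γ s‖⁻¹ • γ s) (Set.Icc a t)).toReal

/-- The (cone) unfolding of a space curve: the planar curve with the same height and
the spherical arclength as polar angle. -/
def unfolding (a : ℝ) (γ : ℝ → E3) (t : ℝ) : E2 :=
  ‖γ t‖ • (WithLp.equiv 2 (Fin 2 → ℝ)).symm
    ![Real.cos (sphericalArc a γ t), Real.sin (sphericalArc a γ t)]

/-- The standard isometric embedding `ℝ² → ℝ³`, `(x,y) ↦ (x,y,0)`. -/
def emb (v : E2) : E3 := (WithLp.equiv 2 (Fin 3 → ℝ)).symm ![v 0, v 1, 0]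

lemma encard_iUnion_aux {α : Type*} (t : ℕ → Set α) (ht : Pairwise (Function.onFun Disjoint t)) :
    (((⋃ n, t n).encard : ℕ∞) : ℝ≥0∞) = ∑' n, ((t n).encard : ℝ≥0∞) := by
  let _ : MeasurableSpace α := ⊤
  have h := measure_iUnion (μ := (Measure.count : Measure α)) ht (fun n => trivial)
  simpa [Measure.count_apply (MeasurableSpace.measurableSet_top)] using h

section area
variable {E : Type*} [NormedAddCommGroup E] [NormedSpace ℝ E] [FiniteDimensional ℝ E]
  [MeasurableSpace E] [BorelSpace E] [Nontrivial E]

lemma area_mult (μ : Measure E) [μ.IsAddHaarMeasure] {s : Set E} (hs : MeasurableSet s)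
    {f : E → E} {f' : E → E →L[ℝ] E} (hf' : ∀ x ∈ s, HasFDerivWithinAt f (f' x) s x)
    (hm : Measurable f') :
    AEMeasurable (fun y => ((({x ∈ s | f x = y} : Set E).encard : ℕ∞) : ℝ≥0∞)) μ ∧
    ∫⁻ y, ((({x ∈ s | f x = y} : Set E).encard : ℕ∞) : ℝ≥0∞) ∂μ
      = ∫⁻ x in s, ENNReal.ofReal |(f' x).det| ∂μ := by
  classical
  set s0 : Set E := {x ∈ s | (f' x).det = 0} with hs0
  set s1 : Set E := {x ∈ s | (f' x).det ≠ 0} with hs1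
  have hdet : Measurable (fun x => (f' x).det) := ContinuousLinearMap.continuous_det.measurable.comp hm
  have hs0m : MeasurableSet s0 := hs.inter (hdet (measurableSet_singleton 0))
  have hs1m : MeasurableSet s1 := hs.inter (hdet (measurableSet_singleton 0).compl)
  have hf0 : ∀ x ∈ s0, HasFDerivWithinAt f (f' x) s0 x := fun x hx =>
    (hf' x hx.1).mono (fun y hy => hy.1)
  have hf1 : ∀ x ∈ s1, HasFDerivWithinAt f (f' x) s1 x := fun x hx =>
    (hf' x hx.1).mono (fun y hy => hy.1)
  have hnull : μ (f '' s0) = 0 :=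
    addHaar_image_eq_zero_of_det_fderivWithin_eq_zero μ hf0 (fun x hx => hx.2)
  let r : (E →L[ℝ] E) → ℝ≥0 := fun A =>
    if h : A.det ≠ 0 then
      ‖((A.toContinuousLinearEquivOfDetNeZero h).symm : E →L[ℝ] E)‖₊⁻¹ / 2 else 1
  have hpos : ∀ A : E →L[ℝ] E, ∀ h : A.det ≠ 0,
      0 < ‖((A.toContinuousLinearEquivOfDetNeZero h).symm : E →L[ℝ] E)‖₊⁻¹ := by
    intro A h
    have : 0 < ‖((A.toContinuousLinearEquivOfDetNeZero h).symm : E →L[ℝ] E)‖₊ :=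
      (A.toContinuousLinearEquivOfDetNeZero h).nnnorm_symm_pos
    positivity
  have rpos : ∀ A, r A ≠ 0 := by
    intro A
    by_cases h : A.det ≠ 0
    · have := hpos A h
      simp only [r, dif_pos h]
      positivity
    · simp only [r, dif_neg h]; exact one_ne_zero
  obtain ⟨t, A, tdisj, tm, tcov, tapp, tA⟩ :=
    exists_partition_approximatesLinearOn_of_hasFDerivWithinAt f s1 f' hf1 r rpos
  have hinj : ∀ n, InjOn f (s1 ∩ t n) := by
    intro n
    rcases s1.eq_empty_or_nonempty with h | h
    · simp [h]
    obtain ⟨y, hy, hAy⟩ := tA h n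
    have hd : (A n).det ≠ 0 := by rw [hAy]; exact hy.2
    have h2 := tapp n
    have h3 : ApproximatesLinearOn f (((A n).toContinuousLinearEquivOfDetNeZero hd : E ≃L[ℝ] E) : E →L[ℝ] E) (s1 ∩ t n) (r (A n)) := by
      simpa using h2
    refine h3.injOn (Or.inr ?_)
    simp only [r, dif_pos hd]
    exact NNReal.half_lt_self (hpos _ hd).ne'
  have hPm : ∀ n, MeasurableSet (s1 ∩ t n) := fun n => hs1m.inter (tm n)
  have hfP : ∀ n, ∀ x ∈ s1 ∩ t n, HasFDerivWithinAt f (f' x) (s1 ∩ t n) x := fun n x hx =>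
    (hf1 x hx.1).mono inter_subset_left
  have himm : ∀ n, MeasurableSet (f '' (s1 ∩ t n)) := fun n =>
    measurable_image_of_fderivWithin (hPm n) (hfP n) (hinj n)
  have hae : (fun y => ((({x ∈ s | f x = y} : Set E).encard : ℕ∞) : ℝ≥0∞)) =ᵐ[μ]
      fun y => ∑' n, (f '' (s1 ∩ t n)).indicator (fun _ => (1 : ℝ≥0∞)) y := by
    have : ∀ᵐ y ∂μ, y ∉ f '' s0 := measure_eq_zero_iff_ae_notMem.1 hnull
    filter_upwards [this] with y hy
    have e1 : ({x ∈ s | f x = y} : Set E) = ⋃ n, {x ∈ s1 ∩ t n | f x = y} := by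
      ext x
      simp only [mem_ofPred_eq, mem_iUnion]
      constructor
      · rintro ⟨hx, hxy⟩
        have hx1 : x ∈ s1 := ⟨hx, fun h0 => hy ⟨x, ⟨hx, h0⟩, hxy⟩⟩
        obtain ⟨n, hn⟩ := mem_iUnion.1 (tcov hx1)
        exact ⟨n, ⟨hx1, hn⟩, hxy⟩
      · rintro ⟨n, hx, hxy⟩
        exact ⟨hx.1.1, hxy⟩
    rw [e1, encard_iUnion_aux]
    · congr 1
      ext n
      by_cases h : y ∈ f '' (s1 ∩ t n)
      · rw [indicator_of_mem h]
        obtain ⟨x, hx, hxy⟩ := h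
        have : ({x ∈ s1 ∩ t n | f x = y} : Set E) = {x} := by
          ext z
          simp only [mem_ofPred_eq, mem_singleton_iff]
          constructor
          · rintro ⟨hz, hzy⟩
            exact hinj n hz hx (hzy.trans hxy.symm)
          · rintro rfl
            exact ⟨hx, hxy⟩
        rw [this]; simp
      · rw [indicator_of_notMem h]
        have : ({x ∈ s1 ∩ t n | f x = y} : Set E) = ∅ := by
          ext z
          simp only [mem_ofPred_eq, mem_empty_iff_false, iff_false]
          rintro ⟨hz, hzy⟩
          exact h ⟨z, hz, hzy⟩
        rw [this]; simp
    · intro i j hij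
      exact (tdisj hij).mono (fun x hx => hx.1.2) (fun x hx => hx.1.2)
  have hind : ∀ n, Measurable ((f '' (s1 ∩ t n)).indicator (fun _ => (1 : ℝ≥0∞))) := fun n =>
    measurable_const.indicator (himm n)
  refine ⟨(Measurable.tsum hind).aemeasurable.congr hae.symm, ?_⟩
  rw [lintegral_congr_ae hae, lintegral_tsum (fun n => (hind n).aemeasurable)]
  have hsu : s = s0 ∪ s1 := by
    ext x; simp only [hs0, hs1, mem_union, mem_ofPred_eq]; tauto
  have hdj : Disjoint s0 s1 := by
    rw [Set.disjoint_left]; rintro x ⟨_, h⟩ ⟨_, h'⟩; exact h' h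
  rw [hsu, lintegral_union hs1m hdj]
  have z0 : ∫⁻ x in s0, ENNReal.ofReal |(f' x).det| ∂μ = 0 := by
    rw [setLIntegral_congr_fun (g := fun _ => 0) hs0m (fun x hx => by simp [hx.2])]
    simp
  rw [z0, zero_add]
  have hs1u : s1 = ⋃ n, s1 ∩ t n := by
    rw [← inter_iUnion]; exact (inter_eq_left.2 tcov).symm
  conv_rhs => rw [hs1u]
  rw [lintegral_iUnion hPm]
  · congr 1
    ext n
    rw [lintegral_indicator (himm n), lintegral_abs_det_fderiv_eq_addHaar_image μ (hPm n) (hfP n) (hinj n)]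
    simp
  · intro i j hij
    exact (tdisj hij).mono inter_subset_right inter_subset_right

end area

section nullimage
variable {E : Type*} [NormedAddCommGroup E] [NormedSpace ℝ E] [FiniteDimensional ℝ E]
  [MeasurableSpace E] [BorelSpace E]
variable {F : Type*} [NormedAddCommGroup F] [NormedSpace ℝ F] [FiniteDimensional ℝ F]
  [MeasurableSpace F] [BorelSpace F]

/-- locally Lipschitz images of null sets are null (same dimension). -/
lemma null_image_of_locLip (μ : Measure E) [μ.IsAddHaarMeasure] (ν : Measure F) [ν.IsAddHaarMeasure]
    (hd : Module.finrank ℝ E = Module.finrank ℝ F) {f : E → F} {s : Set E} (hs : μ s = 0)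
    (hf : ∀ x ∈ s, ∃ K : ℝ≥0, ∃ u ∈ nhds x, LipschitzOnWith K f u) : ν (f '' s) = 0 := by
  have h0 : (Measure.hausdorffMeasure (Module.finrank ℝ E : ℝ) : Measure E) s = 0 := by
    rw [Measure.isAddLeftInvariant_eq_smul (Measure.hausdorffMeasure (Module.finrank ℝ E : ℝ)) μ]
    simp [hs]
  choose! K u hu hL using hf
  obtain ⟨c, hcs, hcc, hcov⟩ := TopologicalSpace.countable_cover_nhdsWithin
    (f := u) (s := s) (fun x hx => mem_nhdsWithin_of_mem_nhds (hu x hx))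
  have : f '' s ⊆ ⋃ x ∈ c, f '' (s ∩ u x) := by
    rintro _ ⟨x, hx, rfl⟩
    obtain ⟨y, hy, hxy⟩ := mem_iUnion₂.1 (hcov hx)
    exact mem_iUnion₂.2 ⟨y, hy, x, ⟨hx, hxy⟩, rfl⟩
  refine measure_mono_null this ((measure_biUnion_null_iff hcc).2 fun x hx => ?_)
  rw [Measure.isAddLeftInvariant_eq_smul ν (Measure.hausdorffMeasure (Module.finrank ℝ F : ℝ))]
  have h1 := ((hL x (hcs hx)).mono (inter_subset_right (s := s))).hausdorffMeasure_image_le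
    (d := (Module.finrank ℝ E : ℝ)) (by positivity)
  rw [measure_mono_null inter_subset_left h0, mul_zero, hd] at h1
  simp [le_antisymm h1 (zero_le)]

/-- Lipschitz images of lower dimensional spaces are null. -/
lemma null_range_of_lower_dim (ν : Measure F) [ν.IsAddHaarMeasure]
    (hd : Module.finrank ℝ E < Module.finrank ℝ F) {f : E → F} {s : Set E}
    (hf : ∀ x ∈ s, ∃ K : ℝ≥0, ∃ u ∈ nhds x, LipschitzOnWith K f u) : ν (f '' s) = 0 := by
  rw [Measure.isAddLeftInvariant_eq_smul ν (Measure.hausdorffMeasure (Module.finrank ℝ F : ℝ))]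
  have h1 : dimH (f '' s) ≤ dimH s := by
    refine dimH_image_le_of_locally_lipschitzOn fun x hx => ?_
    obtain ⟨K, u, hu, h⟩ := hf x hx
    exact ⟨K, u, mem_nhdsWithin_of_mem_nhds hu, h⟩
  have h2 : dimH s ≤ Module.finrank ℝ E := by
    rw [← Real.dimH_univ_eq_finrank E]; exact dimH_mono (subset_univ _)
  have h3 : Measure.hausdorffMeasure ((Module.finrank ℝ F : ℝ≥0) : ℝ) (f '' s) = 0 := by
    apply hausdorffMeasure_of_dimH_lt
    refine (h1.trans h2).trans_lt ?_
    exact_mod_cast hd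
  have h4 : Measure.hausdorffMeasure (Module.finrank ℝ F : ℝ) (f '' s) = 0 := by simpa using h3
  simp [h4]

end nullimage

section arclength
variable {V : Type*} [NormedAddCommGroup V] [InnerProductSpace ℝ V] [FiniteDimensional ℝ V]

lemma lip_norm_deriv_le {f : ℝ → V} {K : ℝ≥0} (hf : LipschitzWith K f) (t : ℝ) :
    ‖deriv f t‖ ≤ K := norm_deriv_le_of_lipschitz hf

lemma lip_intervalIntegrable {f : ℝ → V} {K : ℝ≥0} (hf : LipschitzWith K f) (a b : ℝ) :
    IntervalIntegrable (fun t => ‖deriv f t‖) volume a b := by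
  borelize V
  refine (intervalIntegrable_const (c := (K : ℝ))).mono_fun
    (measurable_deriv f).norm.aestronglyMeasurable ?_
  filter_upwards with t
  simpa using lip_norm_deriv_le hf t

lemma lip_dist_le_integral {f : ℝ → V} {K : ℝ≥0} (hf : LipschitzWith K f) {x y : ℝ} (hxy : x ≤ y) :
    ‖f y - f x‖ ≤ ∫ t in x..y, ‖deriv f t‖ := by
  borelize V
  set e : V := f y - f x with he
  by_cases h0 : ‖e‖ = 0
  · rw [h0]
    exact intervalIntegral.integral_nonneg hxy (fun t _ => norm_nonneg _)
  let g : ℝ → ℝ := fun t => ⟪e, f t⟫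
  have hg : LipschitzWith (‖innerSL ℝ e‖₊ * K) g := (innerSL ℝ e).lipschitz.comp hf
  have h1 := (hg.lipschitzOnWith (s := uIcc x y)).absolutelyContinuousOnInterval.integral_deriv_eq_sub
  have h2 : g y - g x = ‖e‖ * ‖e‖ := by
    simp only [g]
    rw [← inner_sub_right, ← he, real_inner_self_eq_norm_mul_norm]
  have h3 : ∫ t in x..y, deriv g t ≤ ∫ t in x..y, ‖e‖ * ‖deriv f t‖ := by
    apply intervalIntegral.integral_mono_ae hxy
    · exact (hg.lipschitzOnWith (s := uIcc x y)).absolutelyContinuousOnInterval.intervalIntegrable_deriv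
    · exact (lip_intervalIntegrable hf x y).const_mul _
    · filter_upwards [hf.ae_differentiableAt_real] with t ht
      have : HasDerivAt g ⟪e, deriv f t⟫ t := by
        exact ((innerSL ℝ e).hasFDerivAt.comp_hasDerivAt t ht.hasDerivAt)
      rw [this.deriv]
      exact real_inner_le_norm _ _
  rw [h1, h2, intervalIntegral.integral_const_mul] at h3
  exact le_of_mul_le_mul_left h3 (lt_of_le_of_ne (norm_nonneg _) (Ne.symm h0))

lemma lip_eVariationOn_le {f : ℝ → V} {K : ℝ≥0} (hf : LipschitzWith K f) {a b : ℝ} (hab : a ≤ b) :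
    eVariationOn f (Icc a b) ≤ ENNReal.ofReal (∫ t in a..b, ‖deriv f t‖) := by
  set g : ℝ → ℝ := fun t => ∫ s in a..t, ‖deriv f s‖ with hg
  have hint := lip_intervalIntegrable hf
  have hgs : ∀ x y, g y - g x = ∫ t in x..y, ‖deriv f t‖ := by
    intro x y
    simp only [hg]
    rw [intervalIntegral.integral_interval_sub_left (hint _ _) (hint _ _)]
  have hmono : Monotone g := by
    intro x y hxy
    have : 0 ≤ g y - g x := by
      rw [hgs]; exact intervalIntegral.integral_nonneg hxy (fun t _ => norm_nonneg _)
    linarith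
  have h1 : eVariationOn f (Icc a b) ≤ eVariationOn g (Icc a b) := by
    refine iSup_le fun p => ?_
    refine le_trans (Finset.sum_le_sum fun i _ => ?_) (eVariationOn.sum_le (f := g) (n := p.1) p.2.2.1 p.2.2.2)
    have hle : p.2.1 i ≤ p.2.1 (i+1) := p.2.2.1 (Nat.le_succ i)
    rw [edist_dist, edist_dist, dist_eq_norm, Real.dist_eq, abs_of_nonneg (sub_nonneg.2 (hmono hle)),
      hgs]
    exact ENNReal.ofReal_le_ofReal (lip_dist_le_integral hf hle)
  refine h1.trans ?_
  have := ((hmono.monotoneOn (Icc a b)).eVariationOn_eq (left_mem_Icc.2 hab) (right_mem_Icc.2 hab)).le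
  rw [inter_self, hgs] at this
  exact this

lemma lip_eVariationOn_le' {f : ℝ → V} {K : ℝ≥0} (hf : LipschitzWith K f) {a b : ℝ} (hab : a ≤ b) :
    eVariationOn f (Icc a b) ≤ ENNReal.ofReal (K * (b - a)) := by
  refine (lip_eVariationOn_le hf hab).trans (ENNReal.ofReal_le_ofReal ?_)
  have := intervalIntegral.integral_mono_on (μ := volume) hab (lip_intervalIntegrable hf a b)
    (intervalIntegrable_const (c := (K : ℝ))) (fun t _ => lip_norm_deriv_le hf t)
  simpa [mul_comm] using this

lemma lip_eVariationOn_eq {f : ℝ → V} {K : ℝ≥0} (hf : LipschitzWith K f) {a b : ℝ} (hab : a ≤ b) :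
    eVariationOn f (Icc a b) = ENNReal.ofReal (∫ t in a..b, ‖deriv f t‖) := by
  refine le_antisymm (lip_eVariationOn_le hf hab) ?_
  have hfin : ∀ x y, x ≤ y → eVariationOn f (Icc x y) ≠ ⊤ := fun x y h =>
    ((lip_eVariationOn_le' hf h).trans_lt ENNReal.ofReal_lt_top).ne
  have hloc : LocallyBoundedVariationOn f univ := by
    intro x y _ _
    rw [univ_inter]
    by_cases h : x ≤ y
    · exact hfin x y h
    · rw [Icc_eq_empty h]; simp [BoundedVariationOn]
  set W : ℝ → ℝ := variationOnFromTo f univ a with hW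
  have hWs : ∀ x y, x ≤ y → W y - W x = (eVariationOn f (Icc x y)).toReal := by
    intro x y hxy
    have := variationOnFromTo.add hloc (mem_univ a) (mem_univ x) (mem_univ y)
    rw [variationOnFromTo.eq_of_le f univ hxy, univ_inter] at this
    simp only [hW]; linarith
  have hmono : Monotone W := by
    intro x y hxy
    have := hWs x y hxy
    have h2 : 0 ≤ (eVariationOn f (Icc x y)).toReal := ENNReal.toReal_nonneg
    linarith
  have hnorm : ∀ x y, ‖f y - f x‖ ≤ ‖W y - W x‖ := by
    have key : ∀ x y, x ≤ y → ‖f y - f x‖ ≤ ‖W y - W x‖ := by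
      intro x y hxy
      rw [hWs x y hxy, Real.norm_of_nonneg ENNReal.toReal_nonneg, ← dist_eq_norm, dist_edist]
      exact ENNReal.toReal_mono (hfin x y hxy)
        (eVariationOn.edist_le f (right_mem_Icc.2 hxy) (left_mem_Icc.2 hxy))
    intro x y
    rcases le_total x y with h | h
    · exact key x y h
    · rw [norm_sub_rev (f y), norm_sub_rev (W y)]; exact key y x h
  have hWlip : LipschitzWith K W := by
    refine LipschitzWith.of_le_add_mul K fun x y => ?_
    rcases le_total x y with h | h
    · have := hmono h
      have : 0 ≤ (K : ℝ) * dist x y := by positivity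
      linarith
    · have := hWs y x h
      have h2 : (eVariationOn f (Icc y x)).toReal ≤ K * (x - y) :=
        ENNReal.toReal_le_of_le_ofReal (mul_nonneg K.2 (by linarith)) (lip_eVariationOn_le' hf h)
      rw [Real.dist_eq, abs_of_nonneg (by linarith : (0:ℝ) ≤ x - y)]
      linarith
  have h1 := (hWlip.lipschitzOnWith (s := uIcc a b)).absolutelyContinuousOnInterval.integral_deriv_eq_sub
  have h2 : ∫ t in a..b, ‖deriv f t‖ ≤ ∫ t in a..b, deriv W t := by
    apply intervalIntegral.integral_mono_ae hab (lip_intervalIntegrable hf a b)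
    · exact (hWlip.lipschitzOnWith (s := uIcc a b)).absolutelyContinuousOnInterval.intervalIntegrable_deriv
    · filter_upwards [hf.ae_differentiableAt_real, hWlip.ae_differentiableAt_real] with t ht ht'
      have e1 := (hasDerivAt_iff_tendsto_slope.1 ht.hasDerivAt).norm
      have e2 := (hasDerivAt_iff_tendsto_slope.1 ht'.hasDerivAt).norm
      have e3 : ‖deriv f t‖ ≤ ‖deriv W t‖ := by
        refine le_of_tendsto_of_tendsto' e1 e2 fun x => ?_
        simp only [slope, vsub_eq_sub, norm_smul]
        exact mul_le_mul_of_nonneg_left (hnorm _ _) (norm_nonneg _)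
      rwa [Real.norm_of_nonneg hmono.deriv_nonneg] at e3
  rw [h1, hWs a b hab] at h2
  rw [← ENNReal.ofReal_toReal (hfin a b hab)]
  exact ENNReal.ofReal_le_ofReal h2

end arclength

section chart

/-- coordinates `ℝ × ℂ ≃ ℝ³`. -/
def Jl : (ℝ × ℂ) ≃ₗ[ℝ] E3 where
  toFun q := !₂[q.1, q.2.re, q.2.im]
  map_add' p q := by ext i; fin_cases i <;> simp
  map_smul' c q := by ext i; fin_cases i <;> simp
  invFun x := (x 0, ⟨x 1, x 2⟩)
  left_inv q := by simp
  right_inv x := by ext i; fin_cases i <;> simp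

def JJ : (ℝ × ℂ) ≃L[ℝ] E3 := Jl.toContinuousLinearEquiv

lemma JJ_inner (p q : ℝ × ℂ) :
    ⟪JJ p, JJ q⟫ = p.1 * q.1 + p.2.re * q.2.re + p.2.im * q.2.im := by
  have : ∀ p, JJ p = (!₂[p.1, p.2.re, p.2.im] : E3) := fun p => rfl
  rw [this, this]
  simp [PiLp.inner_apply, Fin.sum_univ_three]
  ring

def ee : E3 := JJ (1, 0)

lemma ee_inner (p : ℝ × ℂ) : ⟪ee, JJ p⟫ = p.1 := by simp [ee, JJ_inner]

lemma JJ_norm_sq (p : ℝ × ℂ) : ‖JJ p‖ ^ 2 = p.1 ^ 2 + ‖p.2‖ ^ 2 := by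
  rw [← real_inner_self_eq_norm_sq, JJ_inner, ← Complex.normSq_eq_norm_sq, Complex.normSq_apply]
  ring

lemma ee_norm : ‖ee‖ = 1 := by
  have := JJ_norm_sq (1, 0)
  have h2 : ‖ee‖ ^ 2 = 1 := by simpa [ee] using this
  have := norm_nonneg ee
  nlinarith

def dd (x : E3) : E3 := x - ‖x‖ • ee

/-- the reflection swapping `x` and `‖x‖ e`. -/
def Rf (x : E3) (y : E3) : E3 := y - (2 * ⟪dd x, y⟫ / ⟪dd x, dd x⟫) • dd x

/-- the same as a linear map. -/
def Rl (x : E3) : E3 →L[ℝ] E3 :=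
  ContinuousLinearMap.id ℝ E3 - ((2 / ⟪dd x, dd x⟫) • (innerSL ℝ (dd x))).smulRight (dd x)

lemma Rl_apply (x y : E3) : Rl x y = Rf x y := by
  simp [Rl, Rf]
  ring_nf

lemma Rf_inner (x y z : E3) (hx : dd x ≠ 0) : ⟪Rf x y, Rf x z⟫ = ⟪y, z⟫ := by
  have h : ⟪dd x, dd x⟫ ≠ 0 := inner_self_ne_zero.2 hx
  simp only [Rf, inner_sub_left, inner_sub_right, inner_smul_left, inner_smul_right,
    real_inner_comm (dd x) y]
  simp
  field_simp
  ring

lemma Rf_Rf (x y : E3) (hx : dd x ≠ 0) : Rf x (Rf x y) = y := by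
  have h : ⟪dd x, dd x⟫ ≠ 0 := inner_self_ne_zero.2 hx
  have : ⟪dd x, Rf x y⟫ = - ⟪dd x, y⟫ := by
    simp only [Rf, inner_sub_right, inner_smul_right]
    field_simp
    ring
  rw [Rf, this]
  simp only [Rf]
  rw [sub_sub, ← add_smul]
  have : 2 * ⟪dd x, y⟫ / ⟪dd x, dd x⟫ + 2 * -⟪dd x, y⟫ / ⟪dd x, dd x⟫ = 0 := by ring
  rw [this]; simp

lemma Rf_symm (x y z : E3) (hx : dd x ≠ 0) : ⟪Rf x y, z⟫ = ⟪y, Rf x z⟫ := by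
  rw [← Rf_inner x y (Rf x z) hx, Rf_Rf x z hx]

lemma Rf_ee (x : E3) (hx : dd x ≠ 0) : Rf x (‖x‖ • ee) = x := by
  have h : ⟪dd x, dd x⟫ ≠ 0 := inner_self_ne_zero.2 hx
  have h1 : 2 * ⟪dd x, ‖x‖ • ee⟫ = - ⟪dd x, dd x⟫ := by
    simp only [dd, inner_sub_left, inner_sub_right, inner_smul_left, inner_smul_right,
      real_inner_self_eq_norm_sq, ee_norm, real_inner_comm x ee]
    simp
    ring
  rw [Rf, h1, neg_div, div_self h]
  simp [dd]

lemma Rf_self (x : E3) (hx : dd x ≠ 0) : Rf x x = ‖x‖ • ee := by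
  conv_lhs => rw [← Rf_ee x hx, Rf_ee x hx]
  have := Rf_Rf x (‖x‖ • ee) hx
  rwa [Rf_ee x hx] at this

def cc (x : E3) : ℝ := Real.sqrt (1 - (‖x‖ ^ 2)⁻¹)

lemma cc_pos {x : E3} (hx : 1 < ‖x‖) : 0 < cc x := by
  apply Real.sqrt_pos.2
  have : (‖x‖ ^ 2)⁻¹ < 1 := inv_lt_one_of_one_lt₀ (by nlinarith)
  linarith

lemma cc_sq {x : E3} (hx : 1 < ‖x‖) : cc x ^ 2 = 1 - (‖x‖ ^ 2)⁻¹ := by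
  apply Real.sq_sqrt
  have : (‖x‖ ^ 2)⁻¹ < 1 := inv_lt_one_of_one_lt₀ (by nlinarith)
  linarith

/-- parametrisation of the cone `⟪x,v⟫ = ‖v‖`. -/
def Psi (z : E3 × ℂ) : E3 := Rf z.1 (JJ (‖z.2‖ / ‖z.1‖, (cc z.1) • z.2))

lemma Rf_norm (x y : E3) (hx : dd x ≠ 0) : ‖Rf x y‖ = ‖y‖ := by
  have := Rf_inner x y y hx
  rw [real_inner_self_eq_norm_sq, real_inner_self_eq_norm_sq] at this
  exact (pow_left_inj₀ (norm_nonneg _) (norm_nonneg _) two_ne_zero).1 this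

lemma Psi_norm {x : E3} (hd : dd x ≠ 0) (hx : 1 < ‖x‖) (w : ℂ) : ‖Psi (x, w)‖ = ‖w‖ := by
  rw [Psi, Rf_norm _ _ hd]
  refine (pow_left_inj₀ (norm_nonneg _) (norm_nonneg _) two_ne_zero).1 ?_
  rw [JJ_norm_sq]
  simp only [norm_smul, mul_pow, Real.norm_eq_abs, sq_abs, cc_sq hx]
  have : ‖x‖ ≠ 0 := by linarith
  field_simp
  ring

lemma Psi_inner {x : E3} (hd : dd x ≠ 0) (hx : 1 < ‖x‖) (w : ℂ) : ⟪x, Psi (x, w)⟫ = ‖w‖ := by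
  have : ‖x‖ ≠ 0 := by linarith
  rw [Psi, ← Rf_symm _ _ _ hd, Rf_self x hd, inner_smul_left, ee_inner]
  simp
  field_simp

lemma Psi_R {x : E3} (hd : dd x ≠ 0) (w : ℂ) :
    Rf x (Psi (x, w)) = JJ (‖w‖ / ‖x‖, (cc x) • w) := by
  rw [Psi, Rf_Rf _ _ hd]

lemma Psi_inj {x : E3} (hd : dd x ≠ 0) (hx : 1 < ‖x‖) {w w' : ℂ} (h : Psi (x, w) = Psi (x, w')) :
    w = w' := by
  have h1 := Psi_R hd w
  rw [h, Psi_R hd w'] at h1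
  have h2 := congrArg Prod.snd (JJ.injective h1)
  exact (smul_right_injective ℂ (cc_pos hx).ne' h2).symm

lemma Psi_surj {x : E3} (hd : dd x ≠ 0) (hx : 1 < ‖x‖) {v : E3} (hv : ⟪x, v⟫ = ‖v‖) :
    ∃ w : ℂ, ‖w‖ = ‖v‖ ∧ Psi (x, w) = v := by
  have hx0 : ‖x‖ ≠ 0 := by linarith
  obtain ⟨⟨s, z⟩, hsz⟩ := JJ.surjective (Rf x v)
  have hs : s = ‖v‖ / ‖x‖ := by
    have h1 : ⟪ee, Rf x v⟫ = s := by rw [← hsz, ee_inner]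
    have h2 : ⟪‖x‖ • ee, Rf x v⟫ = ‖v‖ := by
      rw [← Rf_symm _ _ _ hd, Rf_ee x hd, hv]
    rw [inner_smul_left, h1] at h2
    simp at h2
    field_simp
    linarith
  have hz : ‖z‖ ^ 2 = (cc x * ‖v‖) ^ 2 := by
    have h1 := JJ_norm_sq (s, z)
    rw [hsz, Rf_norm _ _ hd] at h1
    simp only at h1
    rw [mul_pow, cc_sq hx]
    rw [hs] at h1
    field_simp at h1 ⊢
    linarith
  have hc := cc_pos hx
  have hz' : ‖z‖ = cc x * ‖v‖ :=
    (pow_left_inj₀ (norm_nonneg _) (by positivity) two_ne_zero).1 hz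
  refine ⟨(cc x)⁻¹ • z, ?_, ?_⟩
  · rw [norm_smul, hz', Real.norm_of_nonneg (by positivity)]
    field_simp
  · have hn : ‖(cc x)⁻¹ • z‖ = ‖v‖ := by
      rw [norm_smul, hz', Real.norm_of_nonneg (by positivity)]
      field_simp
    rw [Psi]
    simp only [hn]
    rw [smul_smul, mul_inv_cancel₀ hc.ne', one_smul, ← hs, hsz, Rf_Rf _ _ hd]

lemma Psi_contDiffAt {x : E3} (hd : dd x ≠ 0) (hx : 1 < ‖x‖) {w : ℂ} (hw : w ≠ 0) :
    ContDiffAt ℝ 1 Psi (x, w) := by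
  have hx0 : x ≠ 0 := by rintro rfl; simp at hx; linarith
  have f1 : ContDiffAt ℝ 1 (fun z : E3 × ℂ => z.1) (x, w) := contDiffAt_fst
  have f2 : ContDiffAt ℝ 1 (fun z : E3 × ℂ => z.2) (x, w) := contDiffAt_snd
  have n1 : ContDiffAt ℝ 1 (fun z : E3 × ℂ => ‖z.1‖) (x, w) := f1.norm ℝ hx0
  have n2 : ContDiffAt ℝ 1 (fun z : E3 × ℂ => ‖z.2‖) (x, w) := f2.norm ℝ hw
  have hn : ‖x‖ ≠ 0 := norm_ne_zero_iff.2 hx0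
  have c1 : ContDiffAt ℝ 1 (fun z : E3 × ℂ => cc z.1) (x, w) := by
    apply ContDiffAt.sqrt
    · exact contDiffAt_const.sub ((n1.pow 2).inv (by positivity))
    · have := cc_pos hx
      exact (Real.sqrt_pos.1 this).ne'
  have d1 : ContDiffAt ℝ 1 (fun z : E3 × ℂ => dd z.1) (x, w) :=
    f1.sub (n1.smul contDiffAt_const)
  have y1 : ContDiffAt ℝ 1 (fun z : E3 × ℂ => JJ (‖z.2‖ / ‖z.1‖, (cc z.1) • z.2)) (x, w) :=
    JJ.contDiff.contDiffAt.comp (x, w) ((n2.div n1 hn).prodMk (c1.smul f2))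
  exact y1.sub (((contDiffAt_const.mul (d1.inner ℝ y1)).div (d1.inner ℝ d1)
    (inner_self_ne_zero.2 hd)).smul d1)

/-- explicit determinant on `ℝ × ℂ`. -/
lemma det_RC (f : (ℝ × ℂ) →ₗ[ℝ] (ℝ × ℂ)) : LinearMap.det f =
    (f (1, 0)).1 * ((f (0, 1)).2.re * (f (0, Complex.I)).2.im - (f (0, 1)).2.im * (f (0, Complex.I)).2.re)
    - (f (0, 1)).1 * ((f (1, 0)).2.re * (f (0, Complex.I)).2.im - (f (1, 0)).2.im * (f (0, Complex.I)).2.re)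
    + (f (0, Complex.I)).1 * ((f (1, 0)).2.re * (f (0, 1)).2.im - (f (1, 0)).2.im * (f (0, 1)).2.re) := by
  let b : Module.Basis (Fin 3) ℝ (ℝ × ℂ) :=
    Module.Basis.ofEquivFun (Jl.trans (WithLp.linearEquiv 2 ℝ (Fin 3 → ℝ)))
  have hb0 : b 0 = (1, 0) := by
    apply Jl.injective; ext i; fin_cases i <;> simp [b, Jl]
  have hb1 : b 1 = (0, 1) := by
    apply Jl.injective; ext i; fin_cases i <;> simp [b, Jl]
  have hb2 : b 2 = (0, Complex.I) := by
    apply Jl.injective; ext i; fin_cases i <;> simp [b, Jl]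
  have hr0 : ∀ q, b.repr q 0 = q.1 := fun q => rfl
  have hr1 : ∀ q, b.repr q 1 = q.2.re := fun q => rfl
  have hr2 : ∀ q, b.repr q 2 = q.2.im := fun q => rfl
  rw [← LinearMap.det_toMatrix b, Matrix.det_fin_three]
  simp only [LinearMap.toMatrix_apply, hb0, hb1, hb2, hr0, hr1, hr2]
  ring

end chart

section deriv

def FF (γ : ℝ → E3) (p : ℝ × ℂ) : E3 := Psi (γ p.1, p.2)

lemma FF_hasFDerivAt {γ : ℝ → E3} (hd : ∀ s, dd (γ s) ≠ 0) {t : ℝ} (hx : 1 < ‖γ t‖)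
    (hγ : DifferentiableAt ℝ γ t) {w : ℂ} (hw : w ≠ 0) :
    HasFDerivAt (FF γ) (fderiv ℝ (FF γ) (t, w)) (t, w) := by
  apply DifferentiableAt.hasFDerivAt
  have h1 : DifferentiableAt ℝ Psi (γ t, w) :=
    (Psi_contDiffAt (hd t) hx hw).differentiableAt one_ne_zero
  have h2 : DifferentiableAt ℝ (fun p : ℝ × ℂ => (γ p.1, p.2)) (t, w) := by
    apply DifferentiableAt.prodMk
    · exact DifferentiableAt.comp (g := γ) (t, w) hγ differentiableAt_fst
    · exact differentiableAt_snd
  exact DifferentiableAt.comp (g := Psi) (t, w) h1 h2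

lemma det_formula {γ : ℝ → E3} (hd : ∀ s, dd (γ s) ≠ 0) {t : ℝ} (hx : 1 < ‖γ t‖)
    (hγ : DifferentiableAt ℝ γ t) {w : ℂ} (hw : w ≠ 0) :
    |(fderiv ℝ (fun p => JJ.symm (FF γ p)) (t, w)).det| = |⟪deriv γ t, FF γ (t, w)⟫| / ‖γ t‖ := by
  set D := fderiv ℝ (FF γ) (t, w) with hD
  have hF : HasFDerivAt (FF γ) D (t, w) := FF_hasFDerivAt hd hx hγ hw
  have hG : HasFDerivAt (fun p => JJ.symm (FF γ p)) ((JJ.symm : E3 →L[ℝ] ℝ × ℂ).comp D) (t, w) :=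
    (JJ.symm : E3 →L[ℝ] ℝ × ℂ).hasFDerivAt.comp (t, w) hF
  rw [hG.fderiv]
  set R := Rl (γ t) with hR
  set x := γ t with hxdef
  have hdx : dd x ≠ 0 := hd t
  have hx0 : ‖x‖ ≠ 0 := by linarith
  have hw0 : ‖w‖ ≠ 0 := norm_ne_zero_iff.2 hw
  have hRR : ∀ y, R (R y) = y := fun y => by simp [hR, Rl_apply, Rf_Rf _ _ hdx]
  have hRi : ∀ y z, ⟪R y, R z⟫ = ⟪y, z⟫ := fun y z => by simp [hR, Rl_apply, Rf_inner _ _ _ hdx]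
  -- partial derivatives
  have hnear : ∀ᶠ s in nhds t, 1 < ‖γ s‖ := hγ.continuousAt.norm.eventually (lt_mem_nhds hx)
  have ht : HasDerivAt (fun s => FF γ (s, w)) (D (1, 0)) t :=
    hF.comp_hasDerivAt (f := fun s : ℝ => ((s, w) : ℝ × ℂ)) t ((hasDerivAt_id t).prodMk (hasDerivAt_const t w))
  have hh : ∀ h : ℂ, HasDerivAt (fun r : ℝ => FF γ (t, w + r • h)) (D (0, h)) 0 := by
    intro h
    have e1 : HasDerivAt (fun r : ℝ => ((t, w + r • h) : ℝ × ℂ)) (0, h) 0 := by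
      refine (hasDerivAt_const (0:ℝ) t).prodMk ?_
      simpa using (((hasDerivAt_id (0:ℝ)).smul_const h).const_add w)
    have hF' : HasFDerivAt (FF γ) D (t, w + (0:ℝ) • h) := by simpa using hF
    exact hF'.comp_hasDerivAt (f := fun r : ℝ => ((t, w + r • h) : ℝ × ℂ)) 0 e1
  have i1 : ⟪FF γ (t, w), D (1, 0)⟫ = 0 := by
    have e1 := ht.norm_sq
    have e2 : HasDerivAt (fun s => ‖FF γ (s, w)‖ ^ 2) 0 t := by
      refine (hasDerivAt_const t (‖w‖ ^ 2)).congr_of_eventuallyEq ?_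
      filter_upwards [hnear] with s hs
      simp [FF, Psi_norm (hd s) hs]
    have := e1.unique e2
    linarith
  have i2 : ⟪x, D (1, 0)⟫ = - ⟪deriv γ t, FF γ (t, w)⟫ := by
    have e1 := hγ.hasDerivAt.inner ℝ ht
    have e2 : HasDerivAt (fun s => ⟪γ s, FF γ (s, w)⟫) 0 t := by
      refine (hasDerivAt_const t (‖w‖)).congr_of_eventuallyEq ?_
      filter_upwards [hnear] with s hs
      simp [FF, Psi_inner (hd s) hs]
    have := e1.unique e2
    linarith
  have i3 : ∀ h : ℂ, ⟪FF γ (t, w), D (0, h)⟫ = w.re * h.re + w.im * h.im := by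
    intro h
    have e1 := (hh h).norm_sq
    have e2 : HasDerivAt (fun r : ℝ => ‖w + r • h‖ ^ 2) (2 * ⟪w, h⟫) 0 := by
      have : HasDerivAt (fun r : ℝ => w + r • h) h 0 := by
        simpa using (((hasDerivAt_id (0:ℝ)).smul_const h).const_add w)
      simpa using this.norm_sq
    have e3 : (fun r : ℝ => ‖FF γ (t, w + r • h)‖ ^ 2) = (fun r : ℝ => ‖w + r • h‖ ^ 2) := by
      funext r
      simp [FF, Psi_norm (hd t) hx]
    rw [e3] at e1
    have := e1.unique e2
    simp only [zero_smul, add_zero] at this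
    have h2 : ⟪w, h⟫ = w.re * h.re + w.im * h.im := by
      rw [Complex.inner]; simp; ring
    linarith
  have i4 : ∀ h : ℂ, (JJ.symm (R (D (0, h)))).2 = (cc x) • h := by
    intro h
    let A : E3 →L[ℝ] ℂ := (ContinuousLinearMap.snd ℝ ℝ ℂ).comp ((JJ.symm : E3 →L[ℝ] ℝ × ℂ).comp R)
    have e1 : HasDerivAt (fun r : ℝ => A (FF γ (t, w + r • h))) (A (D (0, h))) 0 :=
      A.hasFDerivAt.comp_hasDerivAt 0 (hh h)
    have e2 : HasDerivAt (fun r : ℝ => (cc x) • (w + r • h)) ((cc x) • h) 0 := by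
      have : HasDerivAt (fun r : ℝ => w + r • h) h 0 := by
        simpa using (((hasDerivAt_id (0:ℝ)).smul_const h).const_add w)
      exact this.const_smul (cc x)
    have e3 : (fun r : ℝ => A (FF γ (t, w + r • h))) = (fun r : ℝ => (cc x) • (w + r • h)) := by
      funext r
      simp only [A, ContinuousLinearMap.comp_apply, hR, Rl_apply, FF, ← hxdef, Psi_R hdx]
      simp
    rw [e3] at e1
    exact e1.unique e2
  have hRF : R (FF γ (t, w)) = JJ (‖w‖ / ‖x‖, (cc x) • w) := by
    simp only [hR, Rl_apply, FF, ← hxdef, Psi_R hdx]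
  have hRx : R x = JJ (‖x‖, 0) := by
    rw [hR, Rl_apply, Rf_self x (hd t), ee, ← map_smul]; simp
  -- the determinant
  let M : (ℝ × ℂ) →ₗ[ℝ] (ℝ × ℂ) := ((JJ.symm : E3 →L[ℝ] ℝ × ℂ).comp (R.comp D)).toLinearMap
  let Q : (ℝ × ℂ) →ₗ[ℝ] (ℝ × ℂ) :=
    ((JJ.symm : E3 →L[ℝ] ℝ × ℂ).comp (R.comp (JJ : (ℝ × ℂ) →L[ℝ] E3))).toLinearMap
  have hM : ∀ p, R (D p) = JJ (M p) := fun p => by simp [M]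
  have hMQ : M = Q ∘ₗ ((JJ.symm : E3 →L[ℝ] ℝ × ℂ).comp D).toLinearMap := by
    apply LinearMap.ext; intro p; simp [M, Q]
  have hQQ : Q ∘ₗ Q = LinearMap.id := by
    apply LinearMap.ext; intro p; simp [Q, hRR]
  have hQ : |LinearMap.det Q| = 1 := by
    have := congrArg LinearMap.det hQQ
    rw [LinearMap.det_comp, LinearMap.det_id] at this
    have h2 : |LinearMap.det Q| * |LinearMap.det Q| = 1 := by rw [← abs_mul, this, abs_one]
    nlinarith [abs_nonneg (LinearMap.det Q)]
  have hdet : |((JJ.symm : E3 →L[ℝ] ℝ × ℂ).comp D).det| = |LinearMap.det M| := by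
    rw [hMQ, LinearMap.det_comp, abs_mul, hQ, one_mul]
  rw [hdet]
  have k1 : ‖w‖ / ‖x‖ * (M (1, 0)).1 + cc x * (w.re * (M (1, 0)).2.re + w.im * (M (1, 0)).2.im) = 0 := by
    rw [← hRi, hRF, hM, JJ_inner] at i1
    simp at i1
    linarith
  have k2 : ‖x‖ * (M (1, 0)).1 = - ⟪deriv γ t, FF γ (t, w)⟫ := by
    rw [← hRi, hRx, hM, JJ_inner] at i2
    simpa using i2
  have k4 : ∀ h, (M (0, h)).2 = (cc x) • h := i4
  have k3 : ∀ h : ℂ, ‖w‖ / ‖x‖ * (M (0, h)).1 + cc x ^ 2 * (w.re * h.re + w.im * h.im)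
      = w.re * h.re + w.im * h.im := by
    intro h
    have := i3 h
    rw [← hRi, hRF, hM, JJ_inner, k4] at this
    simp at this
    linarith
  have hc := cc_sq hx
  have k3' : ∀ h : ℂ, (M (0, h)).1 = (w.re * h.re + w.im * h.im) / (‖x‖ * ‖w‖) := by
    intro h
    have := k3 h
    rw [hc] at this
    field_simp at this ⊢
    linarith
  have hfin : LinearMap.det M = (M (1, 0)).1 := by
    rw [det_RC, k4, k4, k3', k3']
    simp
    field_simp at k1 ⊢
    have hc' : cc x ^ 2 * ‖x‖ ^ 2 = ‖x‖ ^ 2 - 1 := by rw [hc]; field_simp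
    apply mul_left_cancel₀ hx0
    linear_combination (M (1,0)).1 * ‖w‖ * hc' - k1
  rw [hfin]
  have : |‖x‖ * (M (1, 0)).1| = |⟪deriv γ t, FF γ (t, w)⟫| := by rw [k2, abs_neg]
  rw [abs_mul, abs_of_nonneg (norm_nonneg x)] at this
  rw [← this]
  field_simp

end deriv

section phi

lemma locLip_comp {E F G : Type*} [NormedAddCommGroup E] [NormedAddCommGroup F] [NormedSpace ℝ F]
    [NormedAddCommGroup G] [NormedSpace ℝ G] {g : F → G} {φ : E → F} {x : E}
    (hg : ContDiffAt ℝ 1 g (φ x)) {K : ℝ≥0} (hφ : LipschitzWith K φ) :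
    ∃ K' : ℝ≥0, ∃ u ∈ nhds x, LipschitzOnWith K' (fun y => g (φ y)) u := by
  obtain ⟨K1, t, ht, hL⟩ := hg.exists_lipschitzOnWith
  exact ⟨K1 * K, φ ⁻¹' t, hφ.continuous.continuousAt.preimage_mem_nhds ht,
    hL.comp hφ.lipschitzOnWith (fun y hy => hy)⟩

def DD : Set ℂ := {w | w ≠ 0 ∧ ‖w‖ < 1}

lemma DD_meas : MeasurableSet DD := by
  apply MeasurableSet.inter
  · exact (measurableSet_singleton (0:ℂ)).compl
  · exact measurableSet_lt measurable_norm measurable_const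

/-- the density of the horizon in terms of height, radial speed and speed. -/
def Phi (ρ q σ : ℝ) : ℝ≥0∞ := ∫⁻ w in DD, ENNReal.ofReal
  (|(q / ρ) * (‖w‖ / ρ) + Real.sqrt (1 - (ρ ^ 2)⁻¹) * (Real.sqrt (σ ^ 2 - (q / ρ) ^ 2) * w.re)| / ρ)

lemma Phi_eq {x : E3} (hd : dd x ≠ 0) (hx : 1 < ‖x‖) (y : E3) :
    ∫⁻ w in DD, ENNReal.ofReal (|⟪y, Psi (x, w)⟫| / ‖x‖) = Phi ‖x‖ ⟪x, y⟫ ‖y‖ := by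
  have hx0 : ‖x‖ ≠ 0 := by linarith
  obtain ⟨⟨s, z⟩, hsz⟩ := JJ.surjective (Rf x y)
  have hs : s = ⟪x, y⟫ / ‖x‖ := by
    have h1 : ⟪ee, Rf x y⟫ = s := by rw [← hsz, ee_inner]
    have h2 : ⟪‖x‖ • ee, Rf x y⟫ = ⟪x, y⟫ := by
      rw [← Rf_symm _ _ _ hd, Rf_ee x hd]
    rw [inner_smul_left, h1] at h2
    simp at h2
    field_simp
    linarith
  have hz : ‖z‖ = Real.sqrt (‖y‖ ^ 2 - s ^ 2) := by
    have h1 := JJ_norm_sq (s, z)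
    rw [hsz, Rf_norm _ _ hd] at h1
    simp only at h1
    rw [h1, add_sub_cancel_left, Real.sqrt_sq (norm_nonneg _)]
  have hI : ∀ w, ⟪y, Psi (x, w)⟫ = s * (‖w‖ / ‖x‖) + cc x * (z.re * w.re + z.im * w.im) := by
    intro w
    rw [Psi, ← Rf_symm _ _ _ hd, ← hsz, JJ_inner]
    simp
    ring
  obtain ⟨ζ, hζ⟩ : ∃ ζ : Circle, z = (‖z‖ : ℂ) * ζ := by
    exact ⟨Circle.exp (Complex.arg z), by simp [Complex.norm_mul_exp_arg_mul_I]⟩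
  have hmp : MeasurePreserving (rotation ζ) (volume : Measure ℂ) volume :=
    (rotation ζ).measurePreserving
  have hre : ∀ w, z.re * (rotation ζ w).re + z.im * (rotation ζ w).im = ‖z‖ * w.re := by
    intro w
    have h1 : (ζ : ℂ).re * (ζ : ℂ).re + (ζ : ℂ).im * (ζ : ℂ).im = 1 := by
      rw [← Complex.normSq_apply]; simp
    have h2 : z.re = ‖z‖ * (ζ : ℂ).re := by conv_lhs => rw [hζ, Complex.re_ofReal_mul]
    have h3 : z.im = ‖z‖ * (ζ : ℂ).im := by conv_lhs => rw [hζ, Complex.im_ofReal_mul]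
    rw [h2, h3, rotation_apply, Complex.mul_re, Complex.mul_im]
    linear_combination ‖z‖ * w.re * h1
  have hpre : (rotation ζ) ⁻¹' DD = DD := by
    ext w; simp [DD, Circle.norm_coe]
  have hemb : MeasurableEmbedding (rotation ζ) :=
    (rotation ζ).toHomeomorph.measurableEmbedding
  have := hmp.setLIntegral_comp_preimage_emb hemb
    (fun w => ENNReal.ofReal (|⟪y, Psi (x, w)⟫| / ‖x‖)) DD
  rw [← this, hpre, Phi]
  congr 1
  funext w
  rw [hI, hre, ← hs, ← hz, cc]
  simp [Circle.norm_coe]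

end phi

section chartarea

def hcount (a b : ℝ) (γ : ℝ → E3) (v : E3) : ℝ≥0∞ :=
  ({t ∈ Set.Ico a b | ⟪γ t, v⟫ = ‖v‖}.encard : ℝ≥0∞)

def BB : Set E3 := {v | v ≠ 0 ∧ ‖v‖ < 1}

lemma BB_meas : MeasurableSet BB := by
  apply MeasurableSet.inter
  · exact (measurableSet_singleton (0:E3)).compl
  · exact measurableSet_lt measurable_norm measurable_const

def TT (a b : ℝ) (γ : ℝ → E3) : Set ℝ := {t | t ∈ Ico a b ∧ 1 < ‖γ t‖ ∧ DifferentiableAt ℝ γ t}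

lemma TT_meas (a b : ℝ) {γ : ℝ → E3} {K : ℝ≥0} (hL : LipschitzWith K γ) :
    MeasurableSet (TT a b γ) := by
  apply measurableSet_Ico.inter
  apply MeasurableSet.inter
  · exact measurableSet_lt measurable_const hL.continuous.measurable.norm
  · exact measurableSet_of_differentiableAt ℝ γ

/-- The cone over a Lipschitz curve is null. -/
lemma cone_null {γ : ℝ → E3} {K : ℝ≥0} (hL : LipschitzWith K γ) :
    (volume : Measure E3) (range (fun p : ℝ × ℝ => p.1 • γ p.2)) = 0 := by
  rw [← image_univ]
  apply null_range_of_lower_dim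
  · simp
  · intro x _
    have hφ : LipschitzWith (max 1 (K * 1)) (fun p : ℝ × ℝ => (p.1, γ p.2)) :=
      LipschitzWith.prodMk LipschitzWith.prod_fst (hL.comp LipschitzWith.prod_snd)
    have hg : ContDiff ℝ 1 (fun q : ℝ × E3 => q.1 • q.2) := ContDiff.smul contDiff_fst contDiff_snd
    exact locLip_comp (φ := fun p : ℝ × ℝ => (p.1, γ p.2)) hg.contDiffAt hφ

instance instHaarRC : (volume : Measure (ℝ × ℂ)).IsAddHaarMeasure := by
  rw [Measure.volume_eq_prod]; infer_instance

lemma chart_null {γ : ℝ → E3} {K : ℝ≥0} (hL : LipschitzWith K γ) (hd : ∀ s, dd (γ s) ≠ 0) :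
    (volume : Measure E3)
      (FF γ '' ({t | 1 < ‖γ t‖ ∧ ¬ DifferentiableAt ℝ γ t} ×ˢ {w : ℂ | w ≠ 0})) = 0 := by
  apply null_image_of_locLip (volume : Measure (ℝ × ℂ))
  · simp
  · have h0 : (volume : Measure ℝ) {t | 1 < ‖γ t‖ ∧ ¬ DifferentiableAt ℝ γ t} = 0 := by
      have := hL.ae_differentiableAt_real
      rw [ae_iff] at this
      exact measure_mono_null (fun t ht => ht.2) this
    rw [Measure.volume_eq_prod, Measure.prod_prod, h0, zero_mul]
  · rintro ⟨t, w⟩ ⟨ht, hw⟩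
    have hφ : LipschitzWith (max (K * 1) 1) (fun p : ℝ × ℂ => (γ p.1, p.2)) :=
      LipschitzWith.prodMk (hL.comp LipschitzWith.prod_fst) LipschitzWith.prod_snd
    exact locLip_comp (g := Psi) (Psi_contDiffAt (hd t) ht.1 hw) hφ

lemma chart_count (a b : ℝ) {γ : ℝ → E3} {K : ℝ≥0} (hL : LipschitzWith K γ)
    (hd : ∀ s, dd (γ s) ≠ 0) (h1 : ∀ s, 1 ≤ ‖γ s‖) :
    ∀ᵐ v : E3, (({p ∈ TT a b γ ×ˢ DD | JJ.symm (FF γ p) = JJ.symm v} : Set (ℝ × ℂ)).encard : ℝ≥0∞)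
      = BB.indicator (hcount a b γ) v := by
  have e1 : ∀ᵐ v : E3, v ∉ range (fun p : ℝ × ℝ => p.1 • γ p.2) := by
    exact measure_eq_zero_iff_ae_notMem.1 (cone_null hL)
  have e2 : ∀ᵐ v : E3, v ∉ (FF γ '' ({t | 1 < ‖γ t‖ ∧ ¬ DifferentiableAt ℝ γ t} ×ˢ {w : ℂ | w ≠ 0})) := by
    exact measure_eq_zero_iff_ae_notMem.1 (chart_null hL hd)
  filter_upwards [e1, e2] with v hv1 hv2
  by_cases hv : v ∈ BB
  · rw [indicator_of_mem hv, hcount]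
    congr 1
    have hinj : InjOn Prod.fst {p ∈ TT a b γ ×ˢ DD | JJ.symm (FF γ p) = JJ.symm v} := by
      rintro ⟨t, w⟩ ⟨⟨ht, hw⟩, hp⟩ ⟨t', w'⟩ ⟨⟨ht', hw'⟩, hp'⟩ htt
      simp only at htt
      subst htt
      have : Psi (γ t, w) = Psi (γ t, w') := JJ.symm.injective (hp.trans hp'.symm)
      rw [Psi_inj (hd t) ht.2.1 this]
    rw [← hinj.encard_image]
    congr 1
    ext t
    constructor
    · rintro ⟨⟨t', w⟩, ⟨⟨ht, hw⟩, hp⟩, rfl⟩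
      have hp' : Psi (γ t', w) = v := JJ.symm.injective hp
      refine ⟨ht.1, ?_⟩
      rw [← hp', Psi_inner (hd t') ht.2.1, Psi_norm (hd t') ht.2.1]
    · rintro ⟨htI, ht⟩
      have hlt : 1 < ‖γ t‖ := by
        refine lt_of_le_of_ne (h1 t) ?_
        intro heq
        apply hv1
        refine ⟨(‖v‖, t), ?_⟩
        have : ⟪γ t, v⟫ = ‖γ t‖ * ‖v‖ := by rw [ht, ← heq, one_mul]
        rw [inner_eq_norm_mul_iff_real, ← heq, one_smul] at this
        exact this
      obtain ⟨w, hwn, hw⟩ := Psi_surj (hd t) hlt ht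
      have hw0 : w ≠ 0 := by
        rw [← norm_ne_zero_iff, hwn]; exact norm_ne_zero_iff.2 hv.1
      have hdiff : DifferentiableAt ℝ γ t := by
        by_contra hcon
        exact hv2 ⟨(t, w), ⟨⟨hlt, hcon⟩, hw0⟩, hw⟩
      exact ⟨(t, w), ⟨⟨⟨htI, hlt, hdiff⟩, hw0, by rw [hwn]; exact hv.2⟩, by
        simp only [FF, hw]⟩, rfl⟩
  · rw [indicator_of_notMem hv]
    have : {p ∈ TT a b γ ×ˢ DD | JJ.symm (FF γ p) = JJ.symm v} = ∅ := by
      rw [eq_empty_iff_forall_notMem]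
      rintro ⟨t, w⟩ ⟨⟨ht, hw⟩, hp⟩
      have hp' : Psi (γ t, w) = v := JJ.symm.injective hp
      have hn := Psi_norm (hd t) ht.2.1 w
      rw [hp'] at hn
      apply hv
      refine ⟨?_, hn ▸ hw.2⟩
      rw [← norm_ne_zero_iff, hn]
      exact norm_ne_zero_iff.2 hw.1
    rw [this]
    simp

def mu0 : Measure (ℝ × ℂ) := (volume : Measure E3).map JJ.symm

instance instHaarMu0 : mu0.IsAddHaarMeasure := JJ.symm.isAddHaarMeasure_map volume

def kap : ℝ≥0∞ := (mu0.addHaarScalarFactor (volume : Measure (ℝ × ℂ)) : ℝ≥0∞)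

lemma mu0_eq : mu0 = kap • (volume : Measure (ℝ × ℂ)) := by
  have := Measure.isAddLeftInvariant_eq_smul mu0 (volume : Measure (ℝ × ℂ))
  rw [kap]
  conv_lhs => rw [this]
  rfl

lemma chart_area (a b : ℝ) {γ : ℝ → E3} {K : ℝ≥0} (hL : LipschitzWith K γ)
    (hd : ∀ s, dd (γ s) ≠ 0) (h1 : ∀ s, 1 ≤ ‖γ s‖) :
    AEMeasurable (BB.indicator (hcount a b γ)) ∧
    ∫⁻ v, BB.indicator (hcount a b γ) v
      = kap * ∫⁻ t in TT a b γ, Phi ‖γ t‖ ⟪γ t, deriv γ t⟫ ‖deriv γ t‖ := by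
  set S := TT a b γ ×ˢ DD with hS
  set G : ℝ × ℂ → ℝ × ℂ := fun p => JJ.symm (FF γ p) with hG
  have hSm : MeasurableSet S := (TT_meas a b hL).prod DD_meas
  have hder : ∀ p ∈ S, HasFDerivWithinAt G (fderiv ℝ G p) S p := by
    rintro ⟨t, w⟩ ⟨ht, hw⟩
    apply HasFDerivAt.hasFDerivWithinAt
    apply DifferentiableAt.hasFDerivAt
    have := (FF_hasFDerivAt hd ht.2.1 ht.2.2 hw.1).differentiableAt
    exact JJ.symm.differentiableAt.comp (t, w) this
  obtain ⟨m1, m2⟩ := area_mult mu0 hSm hder (measurable_fderiv ℝ G)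
  have hae := chart_count a b hL hd h1
  have hJm : Measurable JJ.symm := JJ.symm.continuous.measurable
  have m1' : AEMeasurable (fun v : E3 => (({p ∈ S | G p = JJ.symm v} : Set (ℝ × ℂ)).encard : ℝ≥0∞)) :=
    m1.comp_measurable hJm
  have m2' : ∫⁻ v : E3, (({p ∈ S | G p = JJ.symm v} : Set (ℝ × ℂ)).encard : ℝ≥0∞)
      = ∫⁻ p in S, ENNReal.ofReal |(fderiv ℝ G p).det| ∂mu0 := by
    rw [← m2, mu0, lintegral_map' m1 hJm.aemeasurable]
  refine ⟨m1'.congr hae, ?_⟩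
  rw [← lintegral_congr_ae hae, m2', mu0_eq, Measure.restrict_smul, lintegral_smul_measure, smul_eq_mul]
  congr 1
  have hdm : Measurable (fun p => ENNReal.ofReal |(fderiv ℝ G p).det|) := by
    have : Measurable (fun p => (fderiv ℝ G p).det) :=
      ContinuousLinearMap.continuous_det.measurable.comp (measurable_fderiv ℝ G)
    exact ENNReal.measurable_ofReal.comp (continuous_abs.measurable.comp this)
  rw [Measure.volume_eq_prod, ← Measure.prod_restrict, lintegral_prod _ hdm.aemeasurable]
  apply setLIntegral_congr_fun (TT_meas a b hL)
  intro t ht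
  simp only
  rw [← Phi_eq (hd t) ht.2.1]
  apply setLIntegral_congr_fun DD_meas
  intro w hw
  simp only
  rw [hG, det_formula hd ht.2.1 ht.2.2 hw.1]
  rfl

end chartarea

section gen

lemma exists_rot {γ : ℝ → E3} {K : ℝ≥0} (hL : LipschitzWith K γ) :
    ∃ Q : E3 ≃ₗᵢ[ℝ] E3, ∀ s, γ s ≠ 0 → dd (Q (γ s)) ≠ 0 := by
  have h0 := cone_null hL
  obtain ⟨v, hv⟩ : ∃ v, v ∉ range (fun p : ℝ × ℝ => p.1 • γ p.2) := by
    by_contra! hcon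
    have : range (fun p : ℝ × ℝ => p.1 • γ p.2) = univ := eq_univ_of_forall hcon
    rw [this] at h0
    simp at h0
  have hv0 : v ≠ 0 := by
    rintro rfl
    exact hv ⟨(0, 0), by simp⟩
  have hv1 : ‖v‖ ≠ 0 := norm_ne_zero_iff.2 hv0
  set e0 := ‖v‖⁻¹ • v with he0
  have hn : ‖e0‖ = ‖ee‖ := by
    rw [ee_norm, he0, norm_smul]; simp [hv1]
  refine ⟨(ℝ ∙ (e0 - ee))ᗮ.reflection, fun s hs hcon => hv ?_⟩
  have h1 := Submodule.reflection_sub hn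
  set Q := (ℝ ∙ (e0 - ee))ᗮ.reflection
  rw [dd, ← h1, Q.norm_map, ← map_smul, sub_eq_zero] at hcon
  have h2 := Q.injective hcon
  have h3 : ‖γ s‖ ≠ 0 := norm_ne_zero_iff.2 hs
  refine ⟨(‖v‖ * ‖γ s‖⁻¹, s), ?_⟩
  simp only
  rw [h2, norm_smul, norm_norm, hn, ee_norm, he0, smul_smul, smul_smul]
  have : ‖v‖ * (‖γ s‖ * 1)⁻¹ * ‖γ s‖ * ‖v‖⁻¹ = 1 := by field_simp
  rw [this, one_smul]

lemma gen_area (a b : ℝ) {γ : ℝ → E3} {K : ℝ≥0} (hL : LipschitzWith K γ)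
    (h1 : ∀ s, 1 ≤ ‖γ s‖) :
    AEMeasurable (BB.indicator (hcount a b γ)) ∧
    ∫⁻ v, BB.indicator (hcount a b γ) v
      = kap * ∫⁻ t in TT a b γ, Phi ‖γ t‖ ⟪γ t, deriv γ t⟫ ‖deriv γ t‖ := by
  obtain ⟨Q, hQ⟩ := exists_rot hL
  have hd : ∀ s, dd (Q (γ s)) ≠ 0 := fun s => hQ s (by
    rw [← norm_ne_zero_iff]; linarith [h1 s])
  have hL' : LipschitzWith (1 * K) (fun s => Q (γ s)) := Q.lipschitz.comp hL
  obtain ⟨m1, m2⟩ := chart_area a b hL' hd (fun s => by rw [Q.norm_map]; exact h1 s)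
  have hind : ∀ v, BB.indicator (hcount a b (fun s => Q (γ s))) (Q v) = BB.indicator (hcount a b γ) v := by
    intro v
    have hB : Q v ∈ BB ↔ v ∈ BB := by simp [BB]
    by_cases hv : v ∈ BB
    · rw [indicator_of_mem hv, indicator_of_mem (hB.2 hv)]
      simp [hcount]
    · rw [indicator_of_notMem hv, indicator_of_notMem (fun h => hv (hB.1 h))]
  have hmp : MeasurePreserving Q (volume : Measure E3) volume := Q.measurePreserving
  have hm := m1.comp_quasiMeasurePreserving hmp.quasiMeasurePreserving
  have hfun : (BB.indicator (hcount a b (fun s => Q (γ s)))) ∘ Q = BB.indicator (hcount a b γ) :=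
    funext hind
  rw [hfun] at hm
  refine ⟨hm, ?_⟩
  have hemb : MeasurableEmbedding Q := Q.toHomeomorph.measurableEmbedding
  have e1 := hmp.lintegral_comp_emb hemb (BB.indicator (hcount a b (fun s => Q (γ s))))
  simp only [hind] at e1
  rw [e1, m2]
  congr 1
  have hder : ∀ t, DifferentiableAt ℝ γ t → deriv (fun s => Q (γ s)) t = Q (deriv γ t) := by
    intro t ht
    exact (Q.toContinuousLinearEquiv.hasFDerivAt.comp_hasDerivAt t ht.hasDerivAt).deriv
  have hT : TT a b (fun s => Q (γ s)) = TT a b γ := by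
    ext t
    simp only [TT, mem_ofPred_eq, Q.norm_map]
    have : DifferentiableAt ℝ (fun s => Q (γ s)) t ↔ DifferentiableAt ℝ γ t :=
      Q.toContinuousLinearEquiv.comp_differentiableAt_iff
    rw [this]
  rw [hT]
  apply setLIntegral_congr_fun (TT_meas a b hL)
  intro t ht
  simp only [hder t ht.2.2, Q.norm_map, Q.inner_map_map]

end gen

section sph

def cIoi : ℝ≥0∞ := Measure.volumeIoiPow 2 (Iio (⟨1, mem_Ioi.2 one_pos⟩ : Ioi (0:ℝ)))

lemma cIoi_ne_top : cIoi ≠ ⊤ := by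
  rw [cIoi, Measure.volumeIoiPow_apply_Iio]; exact ENNReal.ofReal_ne_top

lemma cIoi_ne_zero : cIoi ≠ 0 := by
  rw [cIoi, Measure.volumeIoiPow_apply_Iio]; simp; norm_num

lemma horizon_link (a b : ℝ) (γ : ℝ → E3) (hm : AEMeasurable (BB.indicator (hcount a b γ))) :
    ∫⁻ v, BB.indicator (hcount a b γ) v = horizon a b γ * cIoi := by
  set F := BB.indicator (hcount a b γ) with hF
  have hmp := (volume : Measure E3).measurePreserving_homeomorphUnitSphereProd
  have hdim : Module.finrank ℝ E3 - 1 = 2 := by simp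
  rw [hdim] at hmp
  set Hm := homeomorphUnitSphereProd E3 with hHm
  have hembH : MeasurableEmbedding Hm := Hm.measurableEmbedding
  have hcm : MeasurableSet ({0}ᶜ : Set E3) := (measurableSet_singleton 0).compl
  have hembV : MeasurableEmbedding (Subtype.val : ({0}ᶜ : Set E3) → E3) := .subtype_coe hcm
  set g : Metric.sphere (0 : E3) 1 × Ioi (0:ℝ) → ℝ≥0∞ := fun q =>
    (Iio (⟨1, mem_Ioi.2 one_pos⟩ : Ioi (0:ℝ))).indicator
      (fun _ => ({t ∈ Set.Ico a b | ⟪γ t, (q.1 : E3)⟫ = 1}.encard : ℝ≥0∞)) q.2 with hg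
  have hgH : ∀ x : ({0}ᶜ : Set E3), g (Hm x) = F x := by
    rintro ⟨x, hx⟩
    have hx0 : x ≠ 0 := hx
    have hn : ‖x‖ ≠ 0 := norm_ne_zero_iff.2 hx0
    have e1 : ((Hm ⟨x, hx⟩).1 : E3) = ‖x‖⁻¹ • x := by simp [hHm]
    have e2 : ((Hm ⟨x, hx⟩).2 : ℝ) = ‖x‖ := by simp [hHm]
    by_cases h1 : ‖x‖ < 1
    · have hxB : x ∈ BB := ⟨hx0, h1⟩
      have : (Hm ⟨x, hx⟩).2 ∈ Iio (⟨1, mem_Ioi.2 one_pos⟩ : Ioi (0:ℝ)) := by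
        rw [mem_Iio, ← Subtype.coe_lt_coe, e2]; exact h1
      rw [hg, hF, indicator_of_mem hxB]
      simp only
      rw [indicator_of_mem this, hcount, e1]
      congr 3
      ext t
      rw [inner_smul_right, inv_mul_eq_one₀ hn, eq_comm]
    · have hxB : x ∉ BB := fun h => h1 h.2
      have : (Hm ⟨x, hx⟩).2 ∉ Iio (⟨1, mem_Ioi.2 one_pos⟩ : Ioi (0:ℝ)) := by
        rw [mem_Iio, ← Subtype.coe_lt_coe, e2]; exact h1
      rw [hg, hF, indicator_of_notMem hxB]
      simp only
      rw [indicator_of_notMem this]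
  have hgm : AEMeasurable g ((volume : Measure E3).toSphere.prod (Measure.volumeIoiPow 2)) := by
    rw [← hmp.map_eq, hembH.aemeasurable_map_iff]
    have : g ∘ Hm = F ∘ Subtype.val := funext hgH
    rw [this, ← hembV.aemeasurable_map_iff, map_comap_subtype_coe hcm]
    exact hm.restrict
  have e1 : ∫⁻ v, F v = ∫⁻ v in ({0}ᶜ : Set E3), F v := by
    rw [restrict_compl_singleton]
  rw [e1, ← lintegral_subtype_comap hcm]
  have e2 := hmp.lintegral_comp_emb hembH g
  simp only [hgH] at e2
  rw [e2, lintegral_prod _ hgm, horizon, ← lintegral_mul_const' _ _ cIoi_ne_top]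
  congr 1
  funext p
  rw [hg]
  simp only
  rw [lintegral_indicator_const measurableSet_Iio, cIoi]

theorem horizon_formula (a b : ℝ) {γ : ℝ → E3} {K : ℝ≥0} (hL : LipschitzWith K γ)
    (h1 : ∀ s, 1 ≤ ‖γ s‖) :
    horizon a b γ * cIoi
      = kap * ∫⁻ t in TT a b γ, Phi ‖γ t‖ ⟪γ t, deriv γ t⟫ ‖deriv γ t‖ := by
  obtain ⟨m1, m2⟩ := gen_area a b hL h1
  rw [← horizon_link a b γ m1, m2]

theorem horizon_eq_of_data (a b : ℝ) {γ δ : ℝ → E3} {K K' : ℝ≥0} (hL : LipschitzWith K γ)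
    (hL' : LipschitzWith K' δ) (h1 : ∀ s, 1 ≤ ‖γ s‖) (hn : ∀ s, ‖δ s‖ = ‖γ s‖)
    (hi : ∀ᵐ t, ⟪δ t, deriv δ t⟫ = ⟪γ t, deriv γ t⟫ ∧ ‖deriv δ t‖ = ‖deriv γ t‖) :
    horizon a b δ = horizon a b γ := by
  have e1 := horizon_formula a b hL h1
  have e2 := horizon_formula a b hL' (fun s => (hn s).symm ▸ h1 s)
  have hT : TT a b δ =ᵐ[volume] TT a b γ := by
    filter_upwards [hL.ae_differentiableAt_real, hL'.ae_differentiableAt_real] with t ht ht'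
    apply propext
    change (t ∈ TT a b δ ↔ t ∈ TT a b γ)
    simp [TT, ht, ht', hn]
  rw [setLIntegral_congr hT] at e2
  have e3 : ∫⁻ t in TT a b γ, Phi ‖δ t‖ ⟪δ t, deriv δ t⟫ ‖deriv δ t‖
      = ∫⁻ t in TT a b γ, Phi ‖γ t‖ ⟪γ t, deriv γ t⟫ ‖deriv γ t‖ := by
    apply lintegral_congr_ae
    apply ae_restrict_of_ae
    filter_upwards [hi] with t ht
    rw [hn, ht.1, ht.2]
  rw [e3, ← e1] at e2
  exact (ENNReal.mul_left_inj cIoi_ne_zero cIoi_ne_top).1 e2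

end sph

section polar

lemma polar_data {ρ : ℝ → ℝ} {u : ℝ → E3} (hu : ∀ s, ‖u s‖ = 1) {t : ℝ}
    (hρd : DifferentiableAt ℝ ρ t) (hud : DifferentiableAt ℝ u t) :
    ⟪ρ t • u t, deriv (fun s => ρ s • u s) t⟫ = ρ t * deriv ρ t ∧
    ‖deriv (fun s => ρ s • u s) t‖ ^ 2 = deriv ρ t ^ 2 + ρ t ^ 2 * ‖deriv u t‖ ^ 2 := by
  have h1 : deriv (fun s => ρ s • u s) t = ρ t • deriv u t + deriv ρ t • u t :=
    (hρd.hasDerivAt.smul hud.hasDerivAt).deriv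
  have h2 : ⟪u t, deriv u t⟫ = 0 := by
    have e1 := hud.hasDerivAt.norm_sq
    have e2 : HasDerivAt (fun s => ‖u s‖ ^ 2) 0 t := by
      simp only [hu]; exact hasDerivAt_const t _
    have := e1.unique e2
    linarith
  have h3 : ⟪u t, u t⟫ = 1 := by rw [real_inner_self_eq_norm_sq, hu]; norm_num
  have h4 : ⟪deriv u t, u t⟫ = 0 := by rw [real_inner_comm]; exact h2
  rw [h1]
  constructor
  · simp only [inner_add_right, inner_smul_left, inner_smul_right, h2, h3]
    simp [mul_comm]
  · rw [← real_inner_self_eq_norm_sq, ← real_inner_self_eq_norm_sq (deriv u t)]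
    simp only [inner_add_right, inner_add_left, inner_smul_left, inner_smul_right, h2, h3, h4]
    simp
    ring

lemma lip_smul {ρ : ℝ → ℝ} {u : ℝ → E3} {K L M : ℝ≥0} (hu : ∀ s, ‖u s‖ = 1) (hM : ∀ s, |ρ s| ≤ M)
    (hρ : LipschitzWith K ρ) (hL : LipschitzWith L u) :
    LipschitzWith (K + M * L) (fun s => ρ s • u s) := by
  apply LipschitzWith.of_dist_le_mul
  intro s t
  have h1 := hρ.dist_le_mul s t
  have h2 := hL.dist_le_mul s t
  rw [dist_eq_norm] at h1 h2 ⊢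
  have : ρ s • u s - ρ t • u t = (ρ s - ρ t) • u s + ρ t • (u s - u t) := by
    rw [sub_smul, smul_sub]; abel
  rw [this]
  refine (norm_add_le _ _).trans ?_
  rw [norm_smul, norm_smul, hu, mul_one]
  have h3 : ‖ρ t‖ * ‖u s - u t‖ ≤ M * (L * dist s t) :=
    mul_le_mul (hM t) h2 (norm_nonneg _) M.2
  push_cast
  linarith

lemma lip_unit {γ : ℝ → E3} {K : ℝ≥0} (hL : LipschitzWith K γ) (h1 : ∀ s, 1 ≤ ‖γ s‖) :
    LipschitzWith (2 * K) (fun s => ‖γ s‖⁻¹ • γ s) := by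
  apply LipschitzWith.of_dist_le_mul
  intro s t
  have h := hL.dist_le_mul s t
  rw [dist_eq_norm] at h ⊢
  have hs := h1 s
  have ht := h1 t
  have e : ‖γ s‖⁻¹ • γ s - ‖γ t‖⁻¹ • γ t
      = ‖γ s‖⁻¹ • (γ s - γ t) + (‖γ s‖⁻¹ - ‖γ t‖⁻¹) • γ t := by
    rw [sub_smul, smul_sub]; abel
  rw [e]
  refine (norm_add_le _ _).trans ?_
  rw [norm_smul, norm_smul]
  have hi : ‖γ s‖⁻¹ ≤ 1 := inv_le_one_of_one_le₀ hs
  have h2 : ‖(‖γ s‖⁻¹ - ‖γ t‖⁻¹ : ℝ)‖ * ‖γ t‖ ≤ ‖γ s - γ t‖ := by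
    have : (‖γ s‖⁻¹ - ‖γ t‖⁻¹ : ℝ) = ‖γ s‖⁻¹ * (‖γ t‖ - ‖γ s‖) * ‖γ t‖⁻¹ := by
      have : ‖γ s‖ ≠ 0 := by linarith
      have : ‖γ t‖ ≠ 0 := by linarith
      field_simp
    rw [this, norm_mul, norm_mul, norm_inv, norm_norm, norm_inv, norm_norm, mul_assoc,
      inv_mul_cancel₀ (by linarith), mul_one]
    have h3 : ‖(‖γ t‖ - ‖γ s‖ : ℝ)‖ ≤ ‖γ s - γ t‖ := by
      rw [Real.norm_eq_abs, abs_sub_comm]; exact abs_norm_sub_norm_le _ _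
    calc ‖γ s‖⁻¹ * ‖(‖γ t‖ - ‖γ s‖ : ℝ)‖ ≤ 1 * ‖(‖γ t‖ - ‖γ s‖ : ℝ)‖ :=
          mul_le_mul_of_nonneg_right hi (norm_nonneg _)
      _ ≤ _ := by rw [one_mul]; exact h3
  have h4 : ‖(‖γ s‖⁻¹ : ℝ)‖ * ‖γ s - γ t‖ ≤ 1 * ‖γ s - γ t‖ := by
    refine mul_le_mul_of_nonneg_right ?_ (norm_nonneg _)
    rw [norm_inv, norm_norm]; exact hi
  push_cast
  linarith

def cs3 (φ : ℝ) : E3 := Real.cos φ • JJ (1, 0) + Real.sin φ • JJ (0, 1)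

lemma cs3_norm (φ : ℝ) : ‖cs3 φ‖ = 1 := by
  have h : cs3 φ = JJ (Real.cos φ, (Real.sin φ : ℂ)) := by
    rw [cs3, ← map_smul, ← map_smul, ← map_add]; simp
  have h2 := JJ_norm_sq (Real.cos φ, (Real.sin φ : ℂ))
  rw [← h] at h2
  simp only [Complex.norm_real, Real.norm_eq_abs, sq_abs, Real.cos_sq_add_sin_sq] at h2
  have := norm_nonneg (cs3 φ)
  nlinarith

def cs3' (φ : ℝ) : E3 := (-Real.sin φ) • JJ (1, 0) + Real.cos φ • JJ (0, 1)

lemma cs3'_norm (φ : ℝ) : ‖cs3' φ‖ = 1 := by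
  have h : cs3' φ = cs3 (φ + π / 2) := by
    rw [cs3, cs3', Real.cos_add_pi_div_two, Real.sin_add_pi_div_two]
  rw [h, cs3_norm]

lemma cs3_deriv (φ : ℝ) : HasDerivAt cs3 (cs3' φ) φ :=
  ((Real.hasDerivAt_cos φ).smul_const _).add ((Real.hasDerivAt_sin φ).smul_const _)

lemma cs3_lip : LipschitzWith 1 cs3 := by
  apply lipschitzWith_of_nnnorm_deriv_le (fun φ => (cs3_deriv φ).differentiableAt)
  intro φ
  rw [(cs3_deriv φ).deriv, ← NNReal.coe_le_coe, coe_nnnorm, cs3'_norm]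
  simp

def uu (γ : ℝ → E3) (s : ℝ) : E3 := ‖γ s‖⁻¹ • γ s

def th (a : ℝ) (γ : ℝ → E3) (t : ℝ) : ℝ := ∫ s in a..t, ‖deriv (uu γ) s‖

lemma th_lip (a : ℝ) {γ : ℝ → E3} {K : ℝ≥0} (hL : LipschitzWith K (uu γ)) :
    LipschitzWith K (th a γ) := by
  apply LipschitzWith.of_dist_le_mul
  intro s t
  rw [Real.dist_eq, Real.dist_eq, th, th, intervalIntegral.integral_interval_sub_left
    (lip_intervalIntegrable hL _ _) (lip_intervalIntegrable hL _ _), ← Real.norm_eq_abs]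
  apply intervalIntegral.norm_integral_le_of_norm_le_const
  intro x _
  rw [norm_norm]
  exact lip_norm_deriv_le hL x

lemma th_deriv (a : ℝ) {γ : ℝ → E3} {K : ℝ≥0} (hL : LipschitzWith K (uu γ)) :
    ∀ᵐ t, HasDerivAt (th a γ) ‖deriv (uu γ) t‖ t := by
  have : LocallyIntegrable (fun s => ‖deriv (uu γ) s‖) volume := by
    refine (locallyIntegrable_const (K : ℝ)).mono
      (measurable_deriv _).norm.aestronglyMeasurable ?_
    filter_upwards with t
    rw [norm_norm]
    exact (lip_norm_deriv_le hL t).trans (le_abs_self _)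
  filter_upwards [_root_.LocallyIntegrable.ae_hasDerivAt_integral this] with t ht
  exact ht a

def del (a : ℝ) (γ : ℝ → E3) (t : ℝ) : E3 := ‖γ t‖ • cs3 (th a γ t)

/-- the analytic heart for globally Lipschitz curves -/
lemma del_data (a : ℝ) {γ : ℝ → E3} {K M : ℝ≥0} (hL : LipschitzWith K γ) (h1 : ∀ s, 1 ≤ ‖γ s‖)
    (hM : ∀ s, ‖γ s‖ ≤ M) :
    (∃ K', LipschitzWith K' (del a γ)) ∧ (∀ s, ‖del a γ s‖ = ‖γ s‖) ∧
    (∀ᵐ t, ⟪del a γ t, deriv (del a γ) t⟫ = ⟪γ t, deriv γ t⟫ ∧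
      ‖deriv (del a γ) t‖ = ‖deriv γ t‖) := by
  have hul : LipschitzWith (2 * K) (uu γ) := lip_unit hL h1
  have hu1 : ∀ s, ‖uu γ s‖ = 1 := fun s => by
    have : ‖γ s‖ ≠ 0 := by linarith [h1 s]
    simp [uu, norm_smul, this]
  have hρ : LipschitzWith (1 * K) (fun s => ‖γ s‖) := lipschitzWith_one_norm.comp hL
  have hv : LipschitzWith (1 * (2 * K)) (fun s => cs3 (th a γ s)) := cs3_lip.comp (th_lip a hul)
  have hv1 : ∀ s, ‖cs3 (th a γ s)‖ = 1 := fun s => cs3_norm _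
  have hγu : (fun s => ‖γ s‖ • uu γ s) = γ := by
    funext s
    have : ‖γ s‖ ≠ 0 := by linarith [h1 s]
    simp [uu, smul_smul, this]
  refine ⟨⟨_, lip_smul hv1 (M := M) (fun s => by rw [abs_norm]; exact hM s) hρ hv⟩,
    fun s => by simp [del, norm_smul, cs3_norm], ?_⟩
  filter_upwards [hul.ae_differentiableAt_real, hρ.ae_differentiableAt_real,
    hv.ae_differentiableAt_real, th_deriv a hul] with t t1 t2 t3 t4
  obtain ⟨p1, p2⟩ := polar_data hu1 t2 t1
  obtain ⟨q1, q2⟩ := polar_data hv1 t2 t3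
  rw [hγu] at p1 p2
  have hc : ‖γ t‖ • uu γ t = γ t := congrFun hγu t
  rw [hc] at p1
  have hd : ‖deriv (fun s => cs3 (th a γ s)) t‖ = ‖deriv (uu γ) t‖ := by
    have : HasDerivAt (fun s => cs3 (th a γ s)) (‖deriv (uu γ) t‖ • cs3' (th a γ t)) t :=
      (cs3_deriv (th a γ t)).scomp t t4
    rw [this.deriv, norm_smul, cs3'_norm, norm_norm, mul_one]
  constructor
  · rw [p1]; exact q1
  · refine (pow_left_inj₀ (norm_nonneg _) (norm_nonneg _) two_ne_zero).1 ?_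
    rw [p2, ← hd]
    exact q2

end polar

/-- **Unfolding preserves height, length, horizon and efficiency.** -/
theorem unfolding_preserves_height_length_horizon
    (a b : ℝ) (hab : a < b) (γ : ℝ → E3) (C : ℝ≥0)
    (hcont : ContinuousOn γ (Set.Icc a b))
    (hrect : eVariationOn γ (Set.Icc a b) ≠ ⊤)
    (hspeed : HasConstantSpeedOnWith γ (Set.Icc a b) C)
    (hout : ∀ t ∈ Set.Icc a b, 1 ≤ ‖γ t‖) :
    (∀ t ∈ Set.Icc a b, ‖unfolding a γ t‖ = ‖γ t‖) ∧
    eVariationOn (unfolding a γ) (Set.Icc a b) = eVariationOn γ (Set.Icc a b) ∧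
    horizon a b (fun t => emb (unfolding a γ t)) = horizon a b γ ∧
    (horizon a b (fun t => emb (unfolding a γ t))).toReal /
        (eVariationOn (unfolding a γ) (Set.Icc a b)).toReal =
      (horizon a b γ).toReal / (eVariationOn γ (Set.Icc a b)).toReal := by
  have hab' : a ≤ b := hab.le
  -- Lipschitz extension
  have hLip : LipschitzOnWith C γ (Icc a b) := by
    have key : ∀ x ∈ Icc a b, ∀ y ∈ Icc a b, x ≤ y → edist (γ x) (γ y) ≤ C * edist x y := by
      intro x hx y hy hxy
      have h1 := eVariationOn.edist_le γ (s := Icc a b ∩ Icc x y) ⟨hx, left_mem_Icc.2 hxy⟩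
        ⟨hy, right_mem_Icc.2 hxy⟩
      rw [hspeed hx hy] at h1
      refine h1.trans (le_of_eq ?_)
      rw [edist_dist, Real.dist_eq, abs_sub_comm, abs_of_nonneg (sub_nonneg.2 hxy),
        ENNReal.ofReal_mul (NNReal.coe_nonneg C)]
      simp
    intro x hx y hy
    rcases le_total x y with h | h
    · exact key x hx y hy h
    · rw [edist_comm, edist_comm x]; exact key y hy x hx h
  set g : ℝ → E3 := fun t => γ (projIcc a b hab' t) with hgdef
  have hg : ∀ t ∈ Icc a b, g t = γ t := fun t ht => by
    simp only [hgdef, projIcc_of_mem hab' ht]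
  have hgL : LipschitzWith C g := by
    have h1 : LipschitzWith 1 (projIcc a b hab') := LipschitzWith.projIcc hab'
    have h2 : LipschitzWith C (fun x : Icc a b => γ x) := lipschitzOnWith_iff_restrict.1 hLip
    have h3 := h2.comp h1
    rw [mul_one] at h3
    exact h3
  have hg1 : ∀ s, 1 ≤ ‖g s‖ := fun s => hout _ (projIcc a b hab' s).2
  obtain ⟨M, hM⟩ := isCompact_Icc.exists_bound_of_continuousOn hcont
  have hgM : ∀ s, ‖g s‖ ≤ (M.toNNReal : ℝ≥0) := fun s =>
    (hM _ (projIcc a b hab' s).2).trans (Real.le_coe_toNNReal M)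
  obtain ⟨⟨K', hdL⟩, hdn, hdd⟩ := del_data a hgL hg1 hgM
  have hul : LipschitzWith (2 * C) (uu g) := lip_unit hgL hg1
  -- the arc length
  have harc : ∀ t ∈ Icc a b, sphericalArc a γ t = th a g t := by
    intro t ht
    have e1 : eVariationOn (fun s => ‖γ s‖⁻¹ • γ s) (Icc a t) = eVariationOn (uu g) (Icc a t) := by
      apply eVariationOn.congr
      intro s hs
      simp only [uu, hg s ⟨hs.1, hs.2.trans ht.2⟩]
    rw [sphericalArc, e1, lip_eVariationOn_eq hul ht.1, ENNReal.toReal_ofReal]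
    · rfl
    · exact intervalIntegral.integral_nonneg ht.1 (fun _ _ => norm_nonneg _)
  have hemb : ∀ t ∈ Icc a b, emb (unfolding a γ t) = del a g t := by
    intro t ht
    rw [emb, unfolding, del, harc t ht, hg t ht, cs3]
    ext i
    fin_cases i <;> simp [JJ, Jl]
  have hembI : Isometry emb := by
    apply Isometry.of_dist_eq
    intro x y
    simp [emb, EuclideanSpace.dist_eq, Fin.sum_univ_three]
  have hnorm : ∀ t ∈ Icc a b, ‖unfolding a γ t‖ = ‖γ t‖ := by
    intro t ht
    rw [← hg t ht, ← hdn t, ← hemb t ht]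
    have h0 : emb 0 = 0 := by
      rw [emb]; ext i; fin_cases i <;> simp
    have := hembI.dist_eq (unfolding a γ t) 0
    rw [h0, dist_zero_right, dist_zero_right] at this
    exact this.symm
  have hlen : eVariationOn (unfolding a γ) (Set.Icc a b) = eVariationOn γ (Set.Icc a b) := by
    have e1 : eVariationOn (unfolding a γ) (Icc a b)
        = eVariationOn (fun t => emb (unfolding a γ t)) (Icc a b) := by
      simp only [eVariationOn, hembI.edist_eq]
    have e2 : eVariationOn (fun t => emb (unfolding a γ t)) (Icc a b)
        = eVariationOn (del a g) (Icc a b) := eVariationOn.congr hemb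
    have e3 : eVariationOn γ (Icc a b) = eVariationOn g (Icc a b) :=
      eVariationOn.congr (fun t ht => (hg t ht).symm)
    rw [e1, e2, e3, lip_eVariationOn_eq hdL hab', lip_eVariationOn_eq hgL hab']
    congr 1
    apply intervalIntegral.integral_congr_ae
    filter_upwards [hdd] with t ht _
    exact ht.2
  have hhor : horizon a b (fun t => emb (unfolding a γ t)) = horizon a b γ := by
    have hc : ∀ {α β : ℝ → E3}, (∀ t ∈ Icc a b, α t = β t) → horizon a b α = horizon a b β := by
      intro α β h
      rw [horizon, horizon]
      congr 1
      funext p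
      congr 3
      ext t
      constructor
      · rintro ⟨ht, h'⟩
        exact ⟨ht, by rw [← h t (Ico_subset_Icc_self ht)]; exact h'⟩
      · rintro ⟨ht, h'⟩
        exact ⟨ht, by rw [h t (Ico_subset_Icc_self ht)]; exact h'⟩
    rw [hc hemb, ← hc hg]
    exact horizon_eq_of_data a b hgL hdL hg1 hdn hdd
  exact ⟨hnorm, hlen, hhor, by rw [hlen, hhor]⟩
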